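/- arXiv:math/0107037 — 2 statements merged into one kernel-verified Lean document; each statement's English description precedes it below -/
import Mathlib

section
/- With the notation of the coordinate setup: for all indices i, j ∈ {1,…,n} and at every point of W, ∂u^i/∂y_j = ∂u^j/∂y_i. -/
/-!
The graph of `∇F` is Lagrangian for `∑ₖ dzₖ ∧ dwₖ`, because the Hessian of `F` is symmetric. In the
coordinates `(x, y) = (Re z, Re w)` the graph is `z = x + iu`, `w = y + iv`, so the imaginary part
of the restricted form is `∑ₖ (dxₖ ∧ dvₖ + duₖ ∧ dyₖ) = 0`. Evaluated on `∂/∂yⱼ` and `∂/∂yᵢ`, which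
`dx` annihilates, it leaves `∂uⁱ/∂yⱼ - ∂uʲ/∂yᵢ = 0`.
-/

/-- Partial derivative of a real function on `ℝⁿ × ℝⁿ` in the direction of the
`i`-th coordinate of the first factor (the `x`-coordinates). -/
noncomputable def pdx {n : ℕ} (g : (Fin n → ℝ) × (Fin n → ℝ) → ℝ)
    (i : Fin n) (p : (Fin n → ℝ) × (Fin n → ℝ)) : ℝ :=
  fderiv ℝ g p (Pi.single i 1, 0)

/-- Partial derivative of a real function on `ℝⁿ × ℝⁿ` in the direction of the
`j`-th coordinate of the second factor (the `y`-coordinates). -/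
noncomputable def pdy {n : ℕ} (g : (Fin n → ℝ) × (Fin n → ℝ) → ℝ)
    (j : Fin n) (p : (Fin n → ℝ) × (Fin n → ℝ)) : ℝ :=
  fderiv ℝ g p (0, Pi.single j 1)

open scoped Matrix Topology

section SymmetricForm

variable {ι : Type*} [Fintype ι]

lemma dotProduct_mulVec_comm_of_isSymm {R : Type*} [CommSemiring R] {A : Matrix ι ι R}
    (hA : A.IsSymm) (a b : ι → R) : a ⬝ᵥ A *ᵥ b = b ⬝ᵥ A *ᵥ a := by
  rw [Matrix.dotProduct_mulVec, ← Matrix.mulVec_transpose, hA.eq, dotProduct_comm]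

lemma im_dotProduct_of_re_eq_zero {a : ι → ℂ} (ha : (fun k => (a k).re) = 0) (b : ι → ℂ) :
    (a ⬝ᵥ b).im = (fun k => (a k).im) ⬝ᵥ fun k => (b k).re := by
  have re_coord (k : ι) : (a k).re = 0 := congrFun ha k
  simp only [dotProduct, Complex.im_sum, Complex.mul_im, re_coord, zero_mul, zero_add]

end SymmetricForm

section Coordinates

variable {E ι : Type*} [NormedAddCommGroup E] [NormedSpace ℝ E]
  {f : E → ι → ℂ} {f' : E →L[ℝ] ι → ℂ} {p : E}

lemma fderiv_im_coord_apply (hf : HasFDerivAt f f' p) (i : ι) (v : E) :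
    fderiv ℝ (fun q => (f q i).im) p v = (f' v i).im := by
  have him : HasFDerivAt (fun q => (f q i).im) (Complex.imCLM ∘L .proj i ∘L f') p :=
    Complex.imCLM.hasFDerivAt.comp p (hasFDerivAt_pi'.1 hf i)
  rw [him.fderiv]
  rfl

lemma re_fderiv_apply_of_eventuallyEq {L : E →L[ℝ] ι → ℝ} (hf : HasFDerivAt f f' p)
    (hL : (fun q k => (f q k).re) =ᶠ[𝓝 p] L) (v : E) : (fun k => (f' v k).re) = L v := by
  have hre : HasFDerivAt (fun q k => (f q k).re) (.pi fun k => Complex.reCLM ∘L .proj k ∘L f') p :=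
    hasFDerivAt_pi.2 fun k => Complex.reCLM.hasFDerivAt.comp p (hasFDerivAt_pi'.1 hf k)
  exact DFunLike.congr_fun (hre.unique (L.hasFDerivAt.congr_of_eventuallyEq hL)) v

end Coordinates

theorem lagrangian_rel_uy_symm_general {n : ℕ} {gradF : (Fin n → ℂ) → Fin n → ℂ}
    {H : Matrix (Fin n) (Fin n) ℂ} {Ψ : (Fin n → ℝ) × (Fin n → ℝ) → Fin n → ℂ}
    {p : (Fin n → ℝ) × (Fin n → ℝ)}
    (hgrad : HasFDerivAt gradF H.mulVecLin.toContinuousLinearMap (Ψ p)) (hH : H.IsSymm)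
    (hΨ : DifferentiableAt ℝ Ψ p)
    (hΨinv : ∀ᶠ q in 𝓝 p, (fun k => (Ψ q k).re, fun k => (gradF (Ψ q) k).re) = q) (i j : Fin n) :
    pdy (fun q => (Ψ q i).im) j p = pdy (fun q => (Ψ q j).im) i p := by
  let e (k : Fin n) : (Fin n → ℝ) × (Fin n → ℝ) := (0, Pi.single k 1)
  let D := fderiv ℝ Ψ p
  have hD : HasFDerivAt Ψ D p := hΨ.hasFDerivAt
  have hHD : HasFDerivAt (fun q => gradF (Ψ q))
      (H.mulVecLin.toContinuousLinearMap.restrictScalars ℝ ∘L D) p :=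
    (hgrad.restrictScalars ℝ).comp p hD
  have re_dz (k : Fin n) : (fun l => (D (e k) l).re) = 0 :=
    re_fderiv_apply_of_eventuallyEq (L := .fst ℝ (Fin n → ℝ) (Fin n → ℝ)) hD
      (hΨinv.mono fun _ hq => congrArg Prod.fst hq) (e k)
  have re_dw (k : Fin n) : (fun l => ((H *ᵥ D (e k)) l).re) = Pi.single k 1 :=
    re_fderiv_apply_of_eventuallyEq (L := .snd ℝ (Fin n → ℝ) (Fin n → ℝ)) hHD
      (hΨinv.mono fun _ hq => congrArg Prod.snd hq) (e k)
  have pdy_u (k l : Fin n) :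
      pdy (fun q => (Ψ q k).im) l p = (D (e l) ⬝ᵥ H *ᵥ D (e k)).im := by
    rw [im_dotProduct_of_re_eq_zero (re_dz l), re_dw, dotProduct_single_one]
    exact fderiv_im_coord_apply hD k (e l)
  rw [pdy_u, pdy_u, dotProduct_mulVec_comm_of_isSymm hH]

/-- `∂u^i/∂y_j = ∂u^j/∂y_i` on `W`. -/
theorem lagrangian_rel_uy_symm
    {n : ℕ} (hn : 1 ≤ n) (U : Set (Fin n → ℂ)) (hU : IsOpen U)
    (F : (Fin n → ℂ) → ℂ) (gradF : (Fin n → ℂ) → (Fin n → ℂ))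
    (hessF : (Fin n → ℂ) → Matrix (Fin n) (Fin n) ℂ)
    (hF : ∀ z ∈ U, ∃ L : (Fin n → ℂ) →L[ℂ] ℂ,
      HasFDerivAt F L z ∧ ∀ X, L X = ∑ k, gradF z k * X k)
    (hgrad : ∀ z ∈ U, ∃ L : (Fin n → ℂ) →L[ℂ] (Fin n → ℂ),
      HasFDerivAt gradF L z ∧ ∀ X, L X = (hessF z).mulVec X)
    (hsymm : ∀ z ∈ U, (hessF z).IsSymm)
    (hnondeg : ∀ z ∈ U, IsUnit ((hessF z).map Complex.im))
    (W : Set ((Fin n → ℝ) × (Fin n → ℝ))) (hW : IsOpen W)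
    (Ψ : (Fin n → ℝ) × (Fin n → ℝ) → (Fin n → ℂ))
    (hΨU : ∀ p ∈ W, Ψ p ∈ U)
    (hΨsmooth : ContDiffOn ℝ (⊤ : ℕ∞) Ψ W)
    (hΨinv : ∀ p ∈ W,
      ((fun i => (Ψ p i).re, fun i => (gradF (Ψ p) i).re) :
        (Fin n → ℝ) × (Fin n → ℝ)) = p) :
    ∀ i j : Fin n, ∀ p ∈ W,
      pdy (fun q => (Ψ q i).im) j p = pdy (fun q => (Ψ q j).im) i p := by
  intro i j p hp
  obtain ⟨L, hL, hLX⟩ := hgrad (Ψ p) (hΨU p hp)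
  have hWp : W ∈ 𝓝 p := hW.mem_nhds hp
  exact lagrangian_rel_uy_symm_general (hL.congr_fderiv (ContinuousLinearMap.ext hLX))
    (hsymm (Ψ p) (hΨU p hp)) ((hΨsmooth.contDiffAt hWp).differentiableAt (by simp))
    (Filter.eventually_of_mem hWp hΨinv) i j
end

section
/- With the notation of the coordinate setup, define f : W → ℝ by f(x,y) = 2 Im F(Ψ(x,y)) − 2 Σ_{k=1}^n y_k u^k(x,y). Then for every p ∈ W and all vectors w, w' ∈ ℝⁿ × ℝⁿ, the second Fréchet derivative of f satisfies D²f(p)[w, w'] = 2 Re( Σ_{k,l} X_k · (Im HF(Ψ(p)))_{kl} · conj(X'_l) ), where X = DΨ(p)w ∈ ℂⁿ and X' = DΨ(p)w' ∈ ℂⁿ are the images of w, w' under the real Fréchet derivative of Ψ at p. -/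
/-!
Write `z = Ψ` and `ζ = ∇F ∘ Ψ`, with real parts `x`, `y` and imaginary parts `u`, `v`. Since
`dF = ζ · dz`, we get `d(Im F) = v · dx + y · du`, so subtracting `d(y · u)` cancels the `du` term
and leaves `df = 2 (v · dx - u · dy)`. As `x` and `y` are linear coordinates, differentiating once
more only hits `v` and `u`: with `X = dz(w)`, `X' = dz(w')` and `dζ = H dz`, the second derivative
is `2 (Im (H X) · Re X' - Im X · Re (H X'))`. The symmetry of `H` makes the terms in `Re H` cancel,
and what remains is the special Kähler metric.
-/

open Filter Topology
open scoped Matrix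

section ComplexVectors

variable {ι : Type*}

/-- The entrywise real part on `ℂ^ι`, as a continuous real-linear map: it turns the points of the
chart and their gradients into affine coordinates. -/
noncomputable def rePart : (ι → ℂ) →L[ℝ] (ι → ℝ) :=
  ContinuousLinearMap.piMap fun _ => Complex.reCLM

/-- The entrywise imaginary part on `ℂ^ι`, as a continuous real-linear map: it produces the
functions `u` and `v` conjugate to the affine coordinates. -/
noncomputable def imPart : (ι → ℂ) →L[ℝ] (ι → ℝ) :=
  ContinuousLinearMap.piMap fun _ => Complex.imCLM

@[simp]
theorem rePart_apply (z : ι → ℂ) (i : ι) : rePart z i = (z i).re := rfl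

@[simp]
theorem imPart_apply (z : ι → ℂ) (i : ι) : imPart z i = (z i).im := rfl

variable [Fintype ι]

theorem im_dotProduct (a b : ι → ℂ) :
    (a ⬝ᵥ b).im = imPart a ⬝ᵥ rePart b + rePart a ⬝ᵥ imPart b := by
  simp [dotProduct, Finset.sum_add_distrib, add_comm]

theorem rePart_mulVec {κ : Type*} (A : Matrix κ ι ℂ) (z : ι → ℂ) :
    rePart (A *ᵥ z) = A.map Complex.re *ᵥ rePart z - A.map Complex.im *ᵥ imPart z := by
  ext k
  simp [Matrix.mulVec, dotProduct, Finset.sum_sub_distrib]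

theorem imPart_mulVec {κ : Type*} (A : Matrix κ ι ℂ) (z : ι → ℂ) :
    imPart (A *ᵥ z) = A.map Complex.re *ᵥ imPart z + A.map Complex.im *ᵥ rePart z := by
  ext k
  simp [Matrix.mulVec, dotProduct, Finset.sum_add_distrib]

end ComplexVectors

section Metric

variable {ι : Type*} [Fintype ι]

theorem mulVec_dotProduct_of_isSymm {R : Type*} [NonUnitalCommSemiring R] {A : Matrix ι ι R}
    (hA : A.IsSymm) (a b : ι → R) : A *ᵥ a ⬝ᵥ b = a ⬝ᵥ A *ᵥ b := by
  rw [Matrix.dotProduct_mulVec, ← Matrix.mulVec_transpose, hA.eq]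

/-- The special Kähler metric `g(X, X') = 2 Re (Xᵗ (Im H) X̄')` on a coordinate tangent space, where
`H` is the holomorphic Hessian of the prepotential at the base point. -/
noncomputable def specialKahlerMetric (H : Matrix ι ι ℂ) (X X' : ι → ℂ) : ℝ :=
  2 * (∑ k, ∑ l, X k * ((H k l).im : ℂ) * (starRingEnd ℂ) (X' l)).re

theorem specialKahlerMetric_eq_dotProduct (H : Matrix ι ι ℂ) (X X' : ι → ℂ) :
    specialKahlerMetric H X X' =
      2 * (rePart X ⬝ᵥ H.map Complex.im *ᵥ rePart X' +
        imPart X ⬝ᵥ H.map Complex.im *ᵥ imPart X') := by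
  simp only [specialKahlerMetric, Complex.re_sum, dotProduct, Matrix.mulVec, Finset.mul_sum,
    ← Finset.sum_add_distrib]
  refine Finset.sum_congr rfl fun k _ => Finset.sum_congr rfl fun l _ => ?_
  simp only [Complex.mul_re, Complex.mul_im, Complex.ofReal_re, Complex.ofReal_im, Complex.conj_re,
    Complex.conj_im, rePart_apply, imPart_apply, Matrix.map_apply]
  ring

theorem specialKahlerMetric_of_isSymm {H : Matrix ι ι ℂ} (hH : H.IsSymm) (X X' : ι → ℂ) :
    specialKahlerMetric H X X' =
      2 * (imPart (H *ᵥ X) ⬝ᵥ rePart X' - imPart X ⬝ᵥ rePart (H *ᵥ X')) := by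
  have hre := mulVec_dotProduct_of_isSymm (hH.map Complex.re) (imPart X) (rePart X')
  have him := mulVec_dotProduct_of_isSymm (hH.map Complex.im) (rePart X) (rePart X')
  rw [specialKahlerMetric_eq_dotProduct, imPart_mulVec, rePart_mulVec, add_dotProduct,
    dotProduct_sub, hre, him]
  ring

end Metric

section Derivatives

theorem comp_eq_of_hasFDerivAt_of_eventuallyEq {𝕜 E F G : Type*} [NontriviallyNormedField 𝕜]
    [NormedAddCommGroup E] [NormedSpace 𝕜 E] [NormedAddCommGroup F] [NormedSpace 𝕜 F]
    [NormedAddCommGroup G] [NormedSpace 𝕜 G] {g : E → F} {g' : E →L[𝕜] F} {p : E}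
    (hg : HasFDerivAt g g' p) {T : F →L[𝕜] G} {S : E →L[𝕜] G}
    (hTS : ∀ᶠ q in 𝓝 p, T (g q) = S q) : T ∘L g' = S :=
  (T.hasFDerivAt.comp p hg).unique (S.hasFDerivAt.congr_of_eventuallyEq hTS)

variable {ι E : Type*} [Fintype ι] [NormedAddCommGroup E] [NormedSpace ℝ E]

/-- The dot product on `ℝ^ι` as a continuous bilinear map, so that differentials such as `v · dx`
can be written as continuous linear maps. -/
noncomputable def dotProductCLM : (ι → ℝ) →L[ℝ] (ι → ℝ) →L[ℝ] ℝ :=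
  (dotProductBilin ℝ ℝ).toContinuousBilinearMap

@[simp]
theorem dotProductCLM_apply (a b : ι → ℝ) : dotProductCLM a b = a ⬝ᵥ b := rfl

theorem hasFDerivAt_two_mul_im_sub_dotProduct {F : (ι → ℂ) → ℂ} {L : (ι → ℂ) →L[ℂ] ℂ}
    {z ζ : E → ι → ℂ} {z' ζ' : E →L[ℝ] ι → ℂ} {p : E} (hF : HasFDerivAt F L (z p))
    (hL : ∀ X, L X = ζ p ⬝ᵥ X) (hz : HasFDerivAt z z' p) (hζ : HasFDerivAt ζ ζ' p) :
    HasFDerivAt (fun q => 2 * (F (z q)).im - 2 * (rePart (ζ q) ⬝ᵥ imPart (z q)))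
      ((2 : ℝ) • (dotProductCLM (imPart (ζ p)) ∘L rePart ∘L z' -
        dotProductCLM (imPart (z p)) ∘L rePart ∘L ζ')) p := by
  have hImF := Complex.imCLM.hasFDerivAt.comp p ((hF.restrictScalars ℝ).comp p hz)
  have hyu := dotProductCLM.hasFDerivAt_of_bilinear (rePart.hasFDerivAt.comp p hζ)
    (imPart.hasFDerivAt.comp p hz)
  refine ((hImF.const_mul 2).sub (hyu.const_mul 2)).congr_fderiv ?_
  ext w
  simp only [Function.comp_apply, ContinuousLinearMap.precompR_apply,
    ContinuousLinearMap.precompL_apply, ContinuousLinearMap.compL_apply, smul_add, sub_apply,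
    smul_apply, add_apply, smul_eq_mul, ContinuousLinearMap.comp_apply,
    ContinuousLinearMap.coe_restrictScalars', Complex.imCLM_apply, hL, im_dotProduct,
    dotProductCLM_apply, dotProduct_comm (rePart (ζ' w))]
  ring

theorem fderiv_fderiv_apply_of_eventually_hasFDerivAt {f : E → ℝ} {z ζ : E → ι → ℂ}
    {z' ζ' : E →L[ℝ] ι → ℂ} {x y : E →L[ℝ] ι → ℝ} {p : E}
    (hz : HasFDerivAt z z' p) (hζ : HasFDerivAt ζ ζ' p)
    (hf : ∀ᶠ q in 𝓝 p, HasFDerivAt f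
      ((2 : ℝ) • (dotProductCLM (imPart (ζ q)) ∘L x - dotProductCLM (imPart (z q)) ∘L y)) q)
    (w w' : E) :
    fderiv ℝ (fun q => fderiv ℝ f q w') p w =
      2 * (imPart (ζ' w) ⬝ᵥ x w' - imPart (z' w) ⬝ᵥ y w') := by
  have hfderiv : (fun q => fderiv ℝ f q w') =ᶠ[𝓝 p] fun q =>
      2 * (dotProductCLM.flip (x w') (imPart (ζ q)) - dotProductCLM.flip (y w') (imPart (z q))) :=
    hf.mono fun q hq => by simp [hq.fderiv]
  have hv := (dotProductCLM.flip (x w') ∘L imPart).hasFDerivAt.comp p hζ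
  have hu := (dotProductCLM.flip (y w') ∘L imPart).hasFDerivAt.comp p hz
  rw [(((hv.sub hu).const_mul 2).congr_of_eventuallyEq hfderiv).fderiv]
  simp

end Derivatives

theorem second_derivative_f_eq_metric_general {ι E : Type*} [Fintype ι] [NormedAddCommGroup E]
    [NormedSpace ℝ E] {U : Set (ι → ℂ)} {F : (ι → ℂ) → ℂ} {gradF : (ι → ℂ) → ι → ℂ}
    {hessF : (ι → ℂ) → Matrix ι ι ℂ}
    (hF : ∀ z ∈ U, ∃ L : (ι → ℂ) →L[ℂ] ℂ, HasFDerivAt F L z ∧ ∀ X, L X = gradF z ⬝ᵥ X)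
    (hgrad : ∀ z ∈ U, ∃ L : (ι → ℂ) →L[ℂ] ι → ℂ,
      HasFDerivAt gradF L z ∧ ∀ X, L X = hessF z *ᵥ X)
    (hsymm : ∀ z ∈ U, (hessF z).IsSymm)
    {W : Set E} (hW : IsOpen W) {Ψ : E → ι → ℂ} (hΨU : Set.MapsTo Ψ W U)
    (hΨ : DifferentiableOn ℝ Ψ W) (x y : E →L[ℝ] ι → ℝ)
    (hx : ∀ q ∈ W, rePart (Ψ q) = x q) (hy : ∀ q ∈ W, rePart (gradF (Ψ q)) = y q)
    {f : E → ℝ} (hf : ∀ q ∈ W, f q = 2 * (F (Ψ q)).im - 2 * (y q ⬝ᵥ imPart (Ψ q))) :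
    ∀ p ∈ W, ∀ w w' : E, fderiv ℝ (fun q => fderiv ℝ f q w') p w =
      specialKahlerMetric (hessF (Ψ p)) (fderiv ℝ Ψ p w) (fderiv ℝ Ψ p w') := by
  have hdΨ : ∀ q ∈ W, HasFDerivAt Ψ (fderiv ℝ Ψ q) q := fun q hq =>
    (hΨ.differentiableAt (hW.mem_nhds hq)).hasFDerivAt
  have hdζ : ∀ q ∈ W, ∃ ζ' : E →L[ℝ] ι → ℂ, HasFDerivAt (gradF ∘ Ψ) ζ' q ∧
      ∀ w, ζ' w = hessF (Ψ q) *ᵥ fderiv ℝ Ψ q w := fun q hq =>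
    let ⟨_, hL, hLX⟩ := hgrad (Ψ q) (hΨU hq)
    ⟨_, (hL.restrictScalars ℝ).comp q (hdΨ q hq), fun _ => hLX _⟩
  have hdx : ∀ q ∈ W, rePart ∘L fderiv ℝ Ψ q = x := fun q hq =>
    comp_eq_of_hasFDerivAt_of_eventuallyEq (hdΨ q hq) (eventually_of_mem (hW.mem_nhds hq) hx)
  have hdy : ∀ q ∈ W, ∀ ζ', HasFDerivAt (gradF ∘ Ψ) ζ' q → rePart ∘L ζ' = y := fun q hq _ hζ =>
    comp_eq_of_hasFDerivAt_of_eventuallyEq hζ (eventually_of_mem (hW.mem_nhds hq) hy)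
  have hdf : ∀ q ∈ W, HasFDerivAt f ((2 : ℝ) • (dotProductCLM (imPart (gradF (Ψ q))) ∘L x -
      dotProductCLM (imPart (Ψ q)) ∘L y)) q := by
    intro q hq
    obtain ⟨L, hL, hLX⟩ := hF (Ψ q) (hΨU hq)
    obtain ⟨ζ', hζ, -⟩ := hdζ q hq
    rw [← hdx q hq, ← hdy q hq ζ' hζ]
    refine (hasFDerivAt_two_mul_im_sub_dotProduct hL hLX (hdΨ q hq) hζ).congr_of_eventuallyEq ?_
    filter_upwards [hW.mem_nhds hq] with r hr
    rw [hf r hr, ← hy r hr, Function.comp_apply]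
  intro p hp w w'
  obtain ⟨ζ', hζ, hζX⟩ := hdζ p hp
  rw [fderiv_fderiv_apply_of_eventually_hasFDerivAt (hdΨ p hp) hζ
      (eventually_of_mem (hW.mem_nhds hp) hdf),
    ← hdx p hp, ← hdy p hp ζ' hζ, specialKahlerMetric_of_isSymm (hsymm _ (hΨU hp)), ← hζX, ← hζX,
    ContinuousLinearMap.comp_apply, ContinuousLinearMap.comp_apply]

/-- with `f = 2 Im F ∘ Ψ − 2 ∑_k y_k u^k`, the second Fréchet derivative of `f` satisfies `D²f(p)[w,w'] = 2 Re(∑_{k,l} X_k (Im HF(Ψ(p)))_{kl} conj(X'_l))` where `X = DΨ(p)w`, `X' = DΨ(p)w'`. -/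
theorem second_derivative_f_eq_metric
    {n : ℕ} (hn : 1 ≤ n) (U : Set (Fin n → ℂ)) (hU : IsOpen U)
    (F : (Fin n → ℂ) → ℂ) (gradF : (Fin n → ℂ) → (Fin n → ℂ))
    (hessF : (Fin n → ℂ) → Matrix (Fin n) (Fin n) ℂ)
    (hF : ∀ z ∈ U, ∃ L : (Fin n → ℂ) →L[ℂ] ℂ,
      HasFDerivAt F L z ∧ ∀ X, L X = ∑ k, gradF z k * X k)
    (hgrad : ∀ z ∈ U, ∃ L : (Fin n → ℂ) →L[ℂ] (Fin n → ℂ),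
      HasFDerivAt gradF L z ∧ ∀ X, L X = (hessF z).mulVec X)
    (hsymm : ∀ z ∈ U, (hessF z).IsSymm)
    (hnondeg : ∀ z ∈ U, IsUnit ((hessF z).map Complex.im))
    (W : Set ((Fin n → ℝ) × (Fin n → ℝ))) (hW : IsOpen W)
    (Ψ : (Fin n → ℝ) × (Fin n → ℝ) → (Fin n → ℂ))
    (hΨU : ∀ p ∈ W, Ψ p ∈ U)
    (hΨsmooth : ContDiffOn ℝ (⊤ : ℕ∞) Ψ W)
    (hΨinv : ∀ p ∈ W,
      ((fun i => (Ψ p i).re, fun i => (gradF (Ψ p) i).re) :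
        (Fin n → ℝ) × (Fin n → ℝ)) = p)
    (f : (Fin n → ℝ) × (Fin n → ℝ) → ℝ)
    (hf : ∀ q, f q = 2 * (F (Ψ q)).im - 2 * ∑ k, q.2 k * (Ψ q k).im) :
    ∀ p ∈ W, ∀ w w' : (Fin n → ℝ) × (Fin n → ℝ),
      fderiv ℝ (fun q => fderiv ℝ f q w') p w
        = 2 * (∑ k, ∑ l, (fderiv ℝ Ψ p w k) * (((hessF (Ψ p)) k l).im : ℂ) *
            (starRingEnd ℂ) (fderiv ℝ Ψ p w' l)).re :=
  second_derivative_f_eq_metric_general hF hgrad hsymm hW hΨU (hΨsmooth.differentiableOn (by simp))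
    (.fst ℝ _ _) (.snd ℝ _ _) (fun p hp => congrArg Prod.fst (hΨinv p hp))
    (fun p hp => congrArg Prod.snd (hΨinv p hp)) fun q _ => hf q
end
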